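/- arXiv:1910.00644 — 2 statements merged into one kernel-verified Lean document; each statement's English description precedes it below -/
import Mathlib

section
/- Let F be a finite field of characteristic 2 with q elements and let m ≥ 2. Write V = F^{2m} and let Sp_{2m}(F) be the symplectic group of matrices preserving the standard nondegenerate alternating bilinear form B on V. Let Q : V → F be a quadratic form whose polar form (Q(x+y) − Q(x) − Q(y)) equals B and which is of minus type, meaning that every F-subspace W of V on which Q vanishes identically satisfies dim W ≤ m − 1. Let K = {g ∈ Sp_{2m}(F) : Q(g·v) = Q(v) for all v ∈ V} (the orthogonal group O⁻_{2m}(q) inside Sp_{2m}(F)). Then there exists a solvable subgroup H of Sp_{2m}(F) of order q^m(q^m − 1) such that every element of Sp_{2m}(F) is a product hk with h ∈ H and k ∈ K. -/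
/-!
Let `E / F` be the extension of degree `m`. The symplectic space `F²ᵐ` is `E × E` with the form
`Tr (x y' - y x')`, so the Borel subgroup of `SL₂(E)`, which is solvable of order `qᵐ (qᵐ - 1)`,
embeds in `Sp₂ₘ(F)`. A quadratic form polarizing to this symplectic form is
`Tr (a x² + x y + b y²)` for some `a`, `b` in `E`, and minus type forces `a x² + x y + b y²` to be
anisotropic over `E`, i.e. `a b` not to be of the shape `s² + s`. Elements of this shape make up a
subgroup of index two in `E`, which is why the Borel subgroup permutes the anisotropic forms
transitively. It is therefore transitive on the minus-type forms, hence on the cosets of the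
stabilizer of one of them.
-/

open Module

namespace SymplecticFactorization

section Borel

variable (E : Type*) [CommRing E]

/-- The action of the units of a ring on its additive group by multiplication by squares: this is
how the torus of `SL₂(E)` acts on a root subgroup. -/
def squareAction : Eˣ →* MulAut (Multiplicative E) :=
  ((MulAutMultiplicative E).symm.toMonoidHom.comp (DistribMulAction.toAddAut Eˣ E)).comp
    (powMonoidHom 2)

/-- The Borel subgroup of `SL₂(E)`, encoded as the semidirect product of a root subgroup and the
torus. -/
abbrev Borel : Type _ := Multiplicative E ⋊[squareAction E] Eˣ

variable {E} in
@[simp]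
theorem toAdd_squareAction (u : Eˣ) (c : Multiplicative E) :
    (squareAction E u c).toAdd = (u : E) ^ 2 * c.toAdd := by
  change (u ^ 2) • c.toAdd = _
  simp [Units.smul_def]

instance isSolvable_borel : Group.IsSolvable (Borel E) :=
  Group.isSolvable_of_ker_le_range SemidirectProduct.inl SemidirectProduct.rightHom
    SemidirectProduct.range_inl_eq_ker_rightHom.ge

theorem card_borel (K : Type*) [Field K] [Finite K] :
    Nat.card (Borel K) = Nat.card K * (Nat.card K - 1) := by
  rw [SemidirectProduct.card, Nat.card_units]
  rfl

variable (F : Type*) [CommRing F] [Algebra F E]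

/-- The natural representation of the Borel subgroup of `SL₂(E)`, regarded as `F`-linear: the pair
of `c` in the root subgroup and `u` in the torus acts as the lower triangular matrix with rows
`(u⁻¹, 0)` and `(c u⁻¹, u)`. -/
def borelAction : Borel E →* Module.End F (E × E) where
  toFun s :=
    { toFun v := (↑s.right⁻¹ * v.1, s.right * v.2 + s.left.toAdd * (↑s.right⁻¹ * v.1))
      map_add' v w := by ext <;> simp <;> ring
      map_smul' r v := by ext <;> simp }
  map_one' := by ext <;> simp
  map_mul' s t := by
    refine LinearMap.ext fun v ↦ Prod.ext ?_ ?_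
    · simp [mul_comm, mul_left_comm]
    · simp only [SemidirectProduct.mul_left, SemidirectProduct.mul_right, toAdd_mul,
        toAdd_squareAction, mul_inv_rev, Units.val_mul, LinearMap.coe_mk, AddHom.coe_mk,
        Module.End.mul_apply]
      linear_combination
        (s.right * t.left.toAdd * ↑t.right⁻¹ * v.1 : E) * s.right.mul_inv

variable {E F}

@[simp]
theorem borelAction_apply (s : Borel E) (v : E × E) :
    borelAction E F s v =
      (↑s.right⁻¹ * v.1, s.right * v.2 + s.left.toAdd * (↑s.right⁻¹ * v.1)) := rfl

theorem borelAction_injective : Function.Injective (borelAction E F) := by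
  intro s t h
  have h₁ := LinearMap.congr_fun h (1, 0)
  simp only [borelAction_apply, Prod.mk.injEq, mul_one, mul_zero, zero_add, Units.val_inj,
    inv_inj] at h₁
  obtain ⟨hright, hleft⟩ := h₁
  rw [hright, Units.mul_left_inj] at hleft
  exact SemidirectProduct.ext hleft hright

theorem borelAction_det (s : Borel E) (v w : E × E) :
    (borelAction E F s v).1 * (borelAction E F s w).2 -
      (borelAction E F s v).2 * (borelAction E F s w).1 = v.1 * w.2 - v.2 * w.1 := by
  simp only [borelAction_apply]
  linear_combination (v.1 * w.2 - v.2 * w.1) * s.right.mul_inv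

end Borel

section BinaryForm

/-- The binary quadratic form `a x² + x y + b y²`. -/
def binaryForm {E : Type*} [CommRing E] (a b : E) : QuadraticForm E (E × E) :=
  a • QuadraticMap.sq.comp (.fst E E E) + .linMulLin (.fst E E E) (.snd E E E) +
    b • QuadraticMap.sq.comp (.snd E E E)

@[simp]
theorem binaryForm_apply {E : Type*} [CommRing E] (a b : E) (v : E × E) :
    binaryForm a b v = a * v.1 ^ 2 + v.1 * v.2 + b * v.2 ^ 2 := by
  simp [binaryForm, sq]

theorem binaryForm_borelAction {E F : Type*} [CommRing E] [CharP E 2] [CommRing F] [Algebra F E]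
    (a b : E) (s : Borel E) (v : E × E) :
    binaryForm a b (borelAction E F s v) =
      binaryForm ((a + s.left.toAdd + b * s.left.toAdd ^ 2) * (↑s.right⁻¹) ^ 2)
        (b * s.right ^ 2) v := by
  simp only [binaryForm_apply, borelAction_apply]
  linear_combination (v.1 * v.2 * (1 + 2 * b * s.left.toAdd)) * s.right.mul_inv +
    (v.1 * v.2 * b * s.left.toAdd) * CharTwo.two_eq_zero (R := E)

variable {E : Type*} [Field E]

theorem ne_zero_of_binaryForm_anisotropic {a b : E} (h : (binaryForm a b).Anisotropic) :
    b ≠ 0 := by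
  rintro rfl
  simpa using h (0, 1) (by simp)

variable [CharP E 2]

variable (E) in
/-- The Artin–Schreier map `s ↦ s² + s`, additive in characteristic two. -/
def artinSchreier : E →+ E where
  toFun s := s ^ 2 + s
  map_zero' := by simp
  map_add' s t := by rw [CharTwo.add_sq]; ring

@[simp]
theorem artinSchreier_apply (s : E) : artinSchreier E s = s ^ 2 + s := rfl

theorem coe_ker_artinSchreier : ((artinSchreier E).ker : Set E) = {0, 1} := by
  ext s
  have hfactor : s ^ 2 + s = s * (s + 1) := by ring
  simp [hfactor, CharTwo.add_eq_zero]

theorem index_range_artinSchreier [Finite E] : (artinSchreier E).range.index = 2 := by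
  rw [AddSubgroup.index_range, ← SetLike.coe_sort_coe, coe_ker_artinSchreier,
    Nat.card_coe_set_eq, Set.ncard_pair zero_ne_one]

theorem mul_notMem_range_artinSchreier {a b : E} (h : (binaryForm a b).Anisotropic) :
    a * b ∉ (artinSchreier E).range := by
  have hb := ne_zero_of_binaryForm_anisotropic h
  rintro ⟨s, hs⟩
  have hzero : binaryForm a b (1, s / b) = 0 :=
    calc
      binaryForm a b (1, s / b) = (a * b + artinSchreier E s) / b := by
        simp only [binaryForm_apply, artinSchreier_apply]
        field_simp
        ring
      _ = 0 := by rw [hs, CharTwo.add_self_eq_zero, zero_div]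
  simpa using h _ hzero

theorem exists_binaryForm_borelAction_eq (F : Type*) [CommRing F] [Algebra F E] [Finite E]
    {a b a' b' : E} (h : (binaryForm a b).Anisotropic) (h' : (binaryForm a' b').Anisotropic) :
    ∃ s : Borel E, ∀ v, binaryForm a b (borelAction E F s v) = binaryForm a' b' v := by
  have hb := ne_zero_of_binaryForm_anisotropic h
  have hb' := ne_zero_of_binaryForm_anisotropic h'
  obtain ⟨r, hr⟩ : a * b + a' * b' ∈ (artinSchreier E).range := by
    rw [AddSubgroup.add_mem_iff_of_index_two index_range_artinSchreier]
    exact iff_of_false (mul_notMem_range_artinSchreier h) (mul_notMem_range_artinSchreier h')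
  rw [artinSchreier_apply] at hr
  obtain ⟨u, hu⟩ : ∃ u : E, u ^ 2 = b' / b := ⟨_, frobeniusEquiv_symm_pow_p E 2 _⟩
  have hu₀ : u ≠ 0 := by
    rintro rfl
    exact div_ne_zero hb' hb (by simpa using hu.symm)
  have hsnd : b * u ^ 2 = b' := by rw [hu, mul_div_cancel₀ _ hb]
  have hfst : (a + r / b + b * (r / b) ^ 2) * u⁻¹ ^ 2 = a' := by
    rw [← hsnd] at hr
    field_simp
    linear_combination hr + a * b * CharTwo.two_eq_zero (R := E)
  refine ⟨⟨.ofAdd (r / b), .mk0 u hu₀⟩, fun v ↦ ?_⟩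
  rw [binaryForm_borelAction]
  simp only [toAdd_ofAdd, Units.val_inv_eq_inv_val, Units.val_mk0, hfst, hsnd]

end BinaryForm

section MinusType

variable {F V V' : Type*} [Field F] [AddCommGroup V] [Module F V] [AddCommGroup V'] [Module F V']

/-- Quadratic forms of minus type: every totally singular subspace has dimension less than half of
that of the whole space. -/
def IsMinusType (Q : QuadraticForm F V) : Prop :=
  ∀ W : Submodule F V, (∀ w ∈ W, Q w = 0) → 2 * finrank F W < finrank F V

theorem IsMinusType.comp {Q : QuadraticForm F V} (hQ : IsMinusType Q) (g : V' ≃ₗ[F] V) :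
    IsMinusType (Q.comp (g : V' →ₗ[F] V)) := by
  intro W hW
  have h := hQ (W.map (g : V' →ₗ[F] V)) (by rintro _ ⟨w, hw, rfl⟩; exact hW w hw)
  rwa [LinearEquiv.finrank_map_eq, ← g.finrank_eq] at h

/-- A singular vector over `E` spans an `E`-line which is totally singular for the trace form. -/
theorem anisotropic_of_isMinusType_trace {E : Type*} [Field E] [Algebra F E]
    [FiniteDimensional F E] {q : QuadraticForm E (E × E)}
    (hq : IsMinusType ((Algebra.trace F E).compQuadraticMap' q)) : q.Anisotropic := by
  intro v hv
  by_contra hne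
  let line : E →ₗ[F] E × E := (LinearMap.toSpanSingleton E (E × E) v).restrictScalars F
  have hline : Function.Injective line := smul_left_injective E hne
  have hlt := hq (LinearMap.range line) (by
    rintro _ ⟨t, rfl⟩
    change Algebra.trace F E (q (t • v)) = 0
    rw [QuadraticMap.map_smul, hv, smul_zero, map_zero])
  rw [LinearMap.finrank_range_of_inj hline, Module.finrank_prod] at hlt
  omega

end MinusType

section TraceDet

variable {F E : Type*} [CommRing F] [CommRing E] [Algebra F E]

variable (F) in
/-- The `F`-valued symplectic form on `E × E` given by the trace of the determinant. -/
noncomputable def traceDet (v w : E × E) : F := Algebra.trace F E (v.1 * w.2 - v.2 * w.1)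

theorem traceDet_borelAction (s : Borel E) (v w : E × E) :
    traceDet F (borelAction E F s v) (borelAction E F s w) = traceDet F v w := by
  rw [traceDet, borelAction_det, traceDet]

end TraceDet

section Trace

variable {F E : Type*} [Field F] [Field E] [Algebra F E] [FiniteDimensional F E]

theorem exists_trace_mul_eq [Algebra.IsSeparable F E] (f : E →ₗ[F] F) :
    ∃ a, ∀ x, f x = Algebra.trace F E (a * x) := by
  obtain ⟨a, rfl⟩ := ((Algebra.traceForm F E).toDual (traceForm_nondegenerate F E)).surjective f
  exact ⟨a, fun x ↦ by rw [LinearMap.BilinForm.toDual_def, Algebra.traceForm_apply]⟩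

variable [PerfectField F] [CharP F 2]

/-- A form with vanishing polar form is additive, and precomposing it with the square root makes it
linear. -/
theorem exists_trace_mul_sq_eq (q : QuadraticForm F E)
    (hq : ∀ x y, QuadraticMap.polar q x y = 0) :
    ∃ a, ∀ x, q x = Algebra.trace F E (a * x ^ 2) := by
  have : CharP E 2 := charP_of_injective_algebraMap' F 2
  have : PerfectField E := Algebra.IsAlgebraic.perfectField F
  let sqrtF := (frobeniusEquiv F 2).symm
  let sqrtE := (frobeniusEquiv E 2).symm
  have hsmul (c : F) (x : E) : sqrtE (c • x) = sqrtF c • sqrtE x := by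
    rw [RingEquiv.symm_apply_eq, frobeniusEquiv_apply, frobenius_def, smul_pow,
      frobeniusEquiv_symm_pow_p, frobeniusEquiv_symm_pow_p]
  let f : E →ₗ[F] F :=
    { toFun x := q (sqrtE x)
      map_add' x y := by rw [map_add, QuadraticMap.map_add q, hq, add_zero]
      map_smul' c x := by
        rw [hsmul, QuadraticMap.map_smul, ← sq, frobeniusEquiv_symm_pow_p, RingHom.id_apply] }
  obtain ⟨a, ha⟩ := exists_trace_mul_eq f
  exact ⟨a, fun x ↦ by rw [← ha]; exact congrArg q (frobeniusEquiv_symm_pow E 2 x).symm⟩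

theorem exists_eq_trace_binaryForm (Q : QuadraticForm F (E × E))
    (hQ : ∀ v w, QuadraticMap.polar Q v w = traceDet F v w) :
    ∃ a b, Q = (Algebra.trace F E).compQuadraticMap' (binaryForm a b) := by
  obtain ⟨a, ha⟩ := exists_trace_mul_sq_eq (Q.comp (.inl F E E)) fun x y ↦ by
    simpa [QuadraticMap.polar, traceDet] using hQ (x, 0) (y, 0)
  obtain ⟨b, hb⟩ := exists_trace_mul_sq_eq (Q.comp (.inr F E E)) fun x y ↦ by
    simpa [QuadraticMap.polar, traceDet] using hQ (0, x) (0, y)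
  refine ⟨a, b, QuadraticMap.ext fun v ↦ ?_⟩
  calc
    Q v = Q ((v.1, 0) + (0, v.2)) := by simp
    _ = Q (v.1, 0) + Q (0, v.2) + traceDet F (v.1, 0) (0, v.2) := by
      rw [QuadraticMap.map_add Q, hQ]
    _ = Algebra.trace F E (a * v.1 ^ 2) + Algebra.trace F E (b * v.2 ^ 2) +
          Algebra.trace F E (v.1 * v.2) := by
      rw [← ha, ← hb]
      simp [traceDet]
    _ = Algebra.trace F E (binaryForm a b v) := by
      rw [binaryForm_apply, map_add, map_add]
      ring

end Trace

section SymplecticCoordinates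

variable {F E ι : Type*} [Field F] [Field E] [Algebra F E] [FiniteDimensional F E]
  [Algebra.IsSeparable F E] [Fintype ι] [DecidableEq ι]

/-- Coordinates on `E × E` in which the trace of the determinant is the standard symplectic form:
those of the first component in a basis of `E`, and those of the second in the dual basis for the
trace form. -/
noncomputable def symplecticCoordinates (b : Basis ι F E) : (E × E) ≃ₗ[F] (ι → F) × (ι → F) :=
  b.equivFun.prodCongr b.traceDual.equivFun

theorem sum_repr_mul_traceDual_repr (b : Basis ι F E) (x y : E) :
    ∑ i, b.repr x i * b.traceDual.repr y i = Algebra.trace F E (x * y) := by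
  conv_rhs => rw [← b.sum_repr x]
  simp only [Finset.sum_mul, map_sum, smul_mul_assoc, map_smul, smul_eq_mul,
    Basis.traceDual_repr_apply, Algebra.traceForm_apply, mul_comm y]

theorem sum_symplecticCoordinates (b : Basis ι F E) (v w : E × E) :
    ∑ i, ((symplecticCoordinates b v).1 i * (symplecticCoordinates b w).2 i -
      (symplecticCoordinates b v).2 i * (symplecticCoordinates b w).1 i) = traceDet F v w := by
  rw [traceDet, Finset.sum_sub_distrib, map_sub, ← sum_repr_mul_traceDual_repr b, mul_comm v.2,
    ← sum_repr_mul_traceDual_repr b]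
  simp [symplecticCoordinates, mul_comm]

end SymplecticCoordinates

section BorelRep

variable {F E V : Type*} [CommRing F] [CommRing E] [Algebra F E] [AddCommGroup V] [Module F V]
  (e : (E × E) ≃ₗ[F] V)

/-- The representation `borelAction` transported to a space `V` identified with `E × E`. -/
def borelRep : Borel E →* LinearMap.GeneralLinearGroup F V :=
  ((e.conjRingEquiv : _ →* Module.End F V).comp (borelAction E F)).toHomUnits

@[simp]
theorem borelRep_apply (s : Borel E) (v : E × E) :
    (borelRep e s).val (e v) = e (borelAction E F s v) :=
  congrArg (fun w ↦ e (borelAction E F s w)) (e.symm_apply_apply v)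

theorem borelRep_injective : Function.Injective (borelRep e) := fun s t hst ↦
  borelAction_injective (F := F) <| LinearMap.ext fun v ↦ e.injective <| by
    rw [← borelRep_apply, ← borelRep_apply, hst]

theorem borelRep_preserves {B : V → V → F} (hB : ∀ v w, B (e v) (e w) = traceDet F v w)
    (s : Borel E) (x y : V) : B ((borelRep e s).val x) ((borelRep e s).val y) = B x y := by
  obtain ⟨v, rfl⟩ := e.surjective x
  obtain ⟨w, rfl⟩ := e.surjective y
  rw [borelRep_apply, borelRep_apply, hB, hB, traceDet_borelAction]

end BorelRep

section Factorization

variable {F E V : Type*} [Field F] [Field E] [Finite E] [Algebra F E] [AddCommGroup V] [Module F V]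

theorem card_range_borelRep (e : (E × E) ≃ₗ[F] V) :
    Nat.card (borelRep e).range = Nat.card E * (Nat.card E - 1) := by
  rw [← Nat.card_congr (MonoidHom.ofInjective (borelRep_injective e)).toEquiv, card_borel]

variable [CharP F 2] {e : (E × E) ≃ₗ[F] V}

theorem exists_anisotropic_binaryForm_of_isMinusType {Q : QuadraticForm F V}
    (hQ : ∀ v w, QuadraticMap.polar Q (e v) (e w) = traceDet F v w) (hminus : IsMinusType Q) :
    ∃ a b : E, (binaryForm a b).Anisotropic ∧
      ∀ v, Q (e v) = Algebra.trace F E (binaryForm a b v) := by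
  have : Finite F := .of_injective _ (algebraMap F E).injective
  obtain ⟨a, b, hab⟩ := exists_eq_trace_binaryForm (Q.comp (e : E × E →ₗ[F] V)) fun v w ↦ by
    simpa [QuadraticMap.polar] using hQ v w
  exact ⟨a, b, anisotropic_of_isMinusType_trace (hab ▸ hminus.comp e),
    fun v ↦ QuadraticMap.congr_fun hab v⟩

theorem exists_borelRep_eq_of_isMinusType {Q Q' : QuadraticForm F V}
    (hQ : ∀ v w, QuadraticMap.polar Q (e v) (e w) = traceDet F v w)
    (hQ' : ∀ v w, QuadraticMap.polar Q' (e v) (e w) = traceDet F v w)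
    (hminus : IsMinusType Q) (hminus' : IsMinusType Q') :
    ∃ s : Borel E, ∀ x, Q ((borelRep e s).val x) = Q' x := by
  have : CharP E 2 := charP_of_injective_algebraMap' F 2
  obtain ⟨a, b, haniso, hab⟩ := exists_anisotropic_binaryForm_of_isMinusType hQ hminus
  obtain ⟨a', b', haniso', hab'⟩ := exists_anisotropic_binaryForm_of_isMinusType hQ' hminus'
  obtain ⟨s, hs⟩ := exists_binaryForm_borelAction_eq F haniso haniso'
  refine ⟨s, fun x ↦ ?_⟩
  obtain ⟨v, rfl⟩ := e.surjective x
  rw [borelRep_apply, hab, hs, hab']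

theorem exists_mem_range_borelRep_eq_mul {Q : QuadraticForm F V}
    (hQ : ∀ v w, QuadraticMap.polar Q (e v) (e w) = traceDet F v w) (hminus : IsMinusType Q)
    (g : LinearMap.GeneralLinearGroup F V)
    (hg : ∀ x y, QuadraticMap.polar Q (g.val x) (g.val y) = QuadraticMap.polar Q x y) :
    ∃ h ∈ (borelRep e).range, ∃ k : LinearMap.GeneralLinearGroup F V,
      (∀ x, Q (k.val x) = Q x) ∧ g = h * k := by
  let γ : V ≃ₗ[F] V := g.toLinearEquiv
  have hγ v w : QuadraticMap.polar (Q.comp (γ.symm : V →ₗ[F] V)) (e v) (e w) = traceDet F v w :=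
    calc
      _ = QuadraticMap.polar Q (γ.symm (e v)) (γ.symm (e w)) := by simp [QuadraticMap.polar]
      _ = QuadraticMap.polar Q (γ (γ.symm (e v))) (γ (γ.symm (e w))) := (hg _ _).symm
      _ = traceDet F v w := by rw [γ.apply_symm_apply, γ.apply_symm_apply, hQ]
  obtain ⟨s, hs⟩ := exists_borelRep_eq_of_isMinusType hQ hγ hminus (hminus.comp γ.symm)
  refine ⟨borelRep e s⁻¹, ⟨s⁻¹, rfl⟩, borelRep e s * g, fun x ↦ ?_, ?_⟩
  · exact (hs (γ x)).trans (congrArg Q (γ.symm_apply_apply x))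
  · rw [map_inv, inv_mul_cancel_left]

end Factorization

theorem exists_quadraticForm_coe_eq_of_polar_eq_sum {R ι : Type*} [CommRing R] [Fintype ι]
    {Q : (ι → R) × (ι → R) → R} (hhom : ∀ (c : R) v, Q (c • v) = c ^ 2 * Q v)
    (hpolar : ∀ x y, QuadraticMap.polar Q x y = ∑ i, (x.1 i * y.2 i - x.2 i * y.1 i)) :
    ∃ Q' : QuadraticForm R ((ι → R) × (ι → R)), ⇑Q' = Q := by
  refine ⟨.ofPolar Q (fun c v ↦ by rw [hhom, sq, smul_eq_mul]) (fun x x' y ↦ ?_)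
    (fun c x y ↦ ?_), rfl⟩
  · simp only [hpolar, Prod.fst_add, Prod.snd_add, Pi.add_apply, ← Finset.sum_add_distrib]
    exact Finset.sum_congr rfl fun i _ ↦ by ring
  · simp only [hpolar, Prod.smul_fst, Prod.smul_snd, Pi.smul_apply, smul_eq_mul, Finset.mul_sum]
    exact Finset.sum_congr rfl fun i _ ↦ by ring

end SymplecticFactorization

open SymplecticFactorization

/-- Proposition 2.3(ii): for `q` even and `m ≥ 2`, with `K = O⁻₂ₘ(q)` the
stabilizer in `Sp₂ₘ(q)` of a minus-type quadratic form `Q` polarizing to the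
standard symplectic form `B`, there is a solvable subgroup `H ≤ Sp₂ₘ(q)` of
order `qᵐ(qᵐ - 1)` with `Sp₂ₘ(q) = HK`. -/
theorem sp_factorization_minus_type {F : Type*} [Field F] [Fintype F]
    [CharP F 2] (q m : ℕ) (hq : Fintype.card F = q) (hm : 2 ≤ m)
    (B : ((Fin m → F) × (Fin m → F)) → ((Fin m → F) × (Fin m → F)) → F)
    (hB : ∀ x y, B x y = ∑ i : Fin m, (x.1 i * y.2 i - x.2 i * y.1 i))
    (Q : ((Fin m → F) × (Fin m → F)) → F)
    (hQhom : ∀ (c : F) v, Q (c • v) = c ^ 2 * Q v)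
    (hpolar : ∀ x y, Q (x + y) - Q x - Q y = B x y)
    (hminus : ∀ W : Submodule F ((Fin m → F) × (Fin m → F)),
      (∀ w ∈ W, Q w = 0) → Module.finrank F ↥W ≤ m - 1) :
    ∃ H : Subgroup (LinearMap.GeneralLinearGroup F ((Fin m → F) × (Fin m → F))),
      (∀ h ∈ H, ∀ x y, B (h.val x) (h.val y) = B x y) ∧
      IsSolvable ↥H ∧
      Nat.card ↥H = q ^ m * (q ^ m - 1) ∧
      ∀ g : LinearMap.GeneralLinearGroup F ((Fin m → F) × (Fin m → F)),
        (∀ x y, B (g.val x) (g.val y) = B x y) →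
        ∃ h ∈ H, ∃ k : LinearMap.GeneralLinearGroup F ((Fin m → F) × (Fin m → F)),
          ((∀ x y, B (k.val x) (k.val y) = B x y) ∧ (∀ v, Q (k.val v) = Q v)) ∧
          g = h * k := by
  subst hq
  have : NeZero m := ⟨by omega⟩
  let E := FiniteField.Extension F 2 m
  let e := symplecticCoordinates (finBasisOfFinrankEq F E (FiniteField.finrank_extension F 2 m))
  have hBe v w : B (e v) (e w) = traceDet F v w := by rw [hB, sum_symplecticCoordinates]
  obtain ⟨Q, rfl⟩ := exists_quadraticForm_coe_eq_of_polar_eq_sum hQhom fun x y ↦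
    (hpolar x y).trans (hB x y)
  obtain rfl : QuadraticMap.polar Q = B := funext₂ hpolar
  have hQ : IsMinusType Q := fun W hW ↦ by
    have := hminus W hW
    rw [Module.finrank_prod, Module.finrank_fin_fun]
    omega
  refine ⟨(borelRep e).range, ?_, Group.isSolvable_of_surjective
    (borelRep e).rangeRestrict_surjective, ?_, fun g hg ↦ ?_⟩
  · rintro _ ⟨s, rfl⟩
    exact borelRep_preserves e hBe s
  · rw [card_range_borelRep, FiniteField.natCard_extension, Nat.card_eq_fintype_card]
  · obtain ⟨h, hh, k, hk, rfl⟩ := exists_mem_range_borelRep_eq_mul hBe hQ g hg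
    exact ⟨h, hh, k, ⟨fun x y ↦ by simp only [QuadraticMap.polar, ← map_add, hk], hk⟩, rfl⟩
end

section
/- Let G = PSL₂(11), the projective special linear group of degree 2 over the field with 11 elements. Then G admits an exact factorization G = HK where H is a subgroup of order 11 and K is a subgroup isomorphic to the alternating group A₅; that is, H ∩ K = 1 and every element of G is a product hk with h ∈ H and k ∈ K. -/
/-!
By counting, `|PSL₂(11)| = 660 = 11 · 60`, so a subgroup `K ≅ A₅` has prime index `11` not dividing
`|K|`, and every Sylow `11`-subgroup is a complement of `K`.

The subgroup `K` comes from Klein's icosahedral group, which is defined over any field containing a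
primitive fifth root of unity (such as `3` in `ZMod 11`). Klein's five octahedral forms, which are
binary sextics, are permuted by matrices inducing a `5`-cycle and a double transposition, hence all
of `A₅`. The only matrices of determinant `1` that fix all five forms are `±1`, that is, the center.
-/

open scoped MatrixGroups

open Equiv Matrix MulAction

section GroupTheory

theorem isComplement'_sylow_of_index_eq_prime_pow {G : Type*} [Group G] [Finite G] {p n : ℕ}
    [Fact p.Prime] (P : Sylow p G) {K : Subgroup G} (hindex : K.index = p ^ n)
    (hK : ¬p ∣ Nat.card K) : (P : Subgroup G).IsComplement' K := by
  have hG : p ^ n * Nat.card K = Nat.card G := hindex ▸ K.index_mul_card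
  have hcop : (p ^ n).Coprime (Nat.card K) := Nat.Prime.coprime_pow_of_not_dvd Fact.out hK |>.symm
  have hP : Nat.card P = p ^ n := by
    rw [P.card_eq_multiplicity, ← hG, Nat.factorization_mul (NeZero.ne _) Nat.card_pos.ne']
    simp [Nat.factorization_eq_zero_of_not_dvd hK, (Fact.out : p.Prime).factorization_self]
  exact Subgroup.isComplement'_of_coprime (hP ▸ hG) (hP ▸ hcop)

theorem exists_subgroup_mulEquiv_of_ker_eq {N P Q : Type*} [Group N] [Group P] [Group Q]
    {f : N →* P} {g : N →* Q} (hker : f.ker = g.ker) {A : Subgroup Q} (hA : A ≤ g.range) :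
    ∃ K : Subgroup P, Nonempty (K ≃* A) := by
  let e : g.range ≃* f.range := (QuotientGroup.quotientKerEquivRange g).symm.trans
    ((QuotientGroup.quotientMulEquivOfEq hker.symm).trans (QuotientGroup.quotientKerEquivRange f))
  let φ : A →* P := (f.range.subtype.comp e.toMonoidHom).comp (Subgroup.inclusion hA)
  have hφ : Function.Injective φ :=
    (f.range.subtype_injective.comp e.injective).comp (Subgroup.inclusion_injective hA)
  exact ⟨φ.range, ⟨(MonoidHom.ofInjective hφ).symm⟩⟩

theorem alternatingGroup_le_of_isCycle_mem_of_isThreeCycle_mem {α : Type*} [Fintype α]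
    [DecidableEq α] (hα : (Nat.card α).Prime) {H : Subgroup (Perm α)} {σ τ : Perm α}
    (hσ : σ.IsCycle) (hsupp : σ.support = Finset.univ) (hσH : σ ∈ H) (hτ : τ.IsThreeCycle)
    (hτH : τ ∈ H) : alternatingGroup α ≤ H := by
  have hmoved (x : α) : σ x ≠ x := Perm.mem_support.1 (hsupp ▸ Finset.mem_univ x)
  have : IsPretransitive H α := ⟨fun x y ↦ by
    obtain ⟨k, hk⟩ := hσ.exists_zpow_eq (hmoved x) (hmoved y)
    exact ⟨⟨σ ^ k, zpow_mem hσH k⟩, hk⟩⟩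
  exact Perm.alternatingGroup_le_of_isPreprimitive_of_isThreeCycle_mem
    (IsPreprimitive.of_prime_card hα) hτ hτH

/-- The pairs `(g, σ)` such that `g` permutes the family of functions `f` according to `σ`.
Functions are transported by `g` as `φ ↦ φ ∘ g⁻¹`; the defining equation avoids the inverse. -/
def permutingPairs (G : Type*) {ι X Y : Type*} [Group G] [MulAction G X] (f : ι → X → Y) :
    Subgroup (G × Perm ι) where
  carrier := {p | ∀ i x, f (p.2 i) (p.1 • x) = f i x}
  one_mem' i x := by simp
  mul_mem' {p q} hp hq i x := by
    rw [Prod.fst_mul, Prod.snd_mul, Perm.mul_apply, mul_smul, hp, hq]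
  inv_mem' {p} hp i x := by
    simpa using (hp (p.2⁻¹ i) (p.1⁻¹ • x)).symm

end GroupTheory

section Cardinality

theorem card_specialLinearGroup_mul_card_units (n R : Type*) [Fintype n] [DecidableEq n]
    [Nonempty n] [CommRing R] :
    Nat.card (SpecialLinearGroup n R) * Nat.card Rˣ = Nat.card (GL n R) := by
  have hrange : (SpecialLinearGroup.toGL : SpecialLinearGroup n R →* GL n R).range =
      (GeneralLinearGroup.det : GL n R →* Rˣ).ker := by
    ext g
    refine ⟨?_, fun hg ↦ ⟨⟨g, congrArg Units.val hg⟩, Units.ext rfl⟩⟩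
    rintro ⟨A, rfl⟩
    simp
  have hcard := (GeneralLinearGroup.det : GL n R →* Rˣ).ker.card_mul_index
  rwa [Subgroup.index_ker, MonoidHom.range_eq_top.2 GeneralLinearGroup.det_surjective,
    Subgroup.card_top, ← hrange, ← Nat.card_congr
      (MonoidHom.ofInjective SpecialLinearGroup.toGL_injective).toEquiv] at hcard

theorem card_center_specialLinearGroup_fin_two {R : Type*} [CommRing R] [IsDomain R]
    (hR : ringChar R ≠ 2) : Nat.card (Subgroup.center SL(2, R)) = 2 := by
  rw [Nat.card_congr (Matrix.SpecialLinearGroup.center_equiv_rootsOfUnity' (0 : Fin 2)).toEquiv]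
  exact (IsPrimitiveRoot.neg_one _ hR).card_rootsOfUnity

theorem two_mul_card_projectiveSpecialLinearGroup_fin_two {F : Type*} [Field F] [Fintype F]
    (hF : ringChar F ≠ 2) :
    2 * Nat.card PSL(2, F) = Fintype.card F * (Fintype.card F ^ 2 - 1) := by
  set q := Fintype.card F
  have hq : 0 < q - 1 := Nat.sub_pos_of_lt Fintype.one_lt_card
  have hSL : Nat.card SL(2, F) * (q - 1) = (q ^ 2 - 1) * (q ^ 2 - q) := by
    have h := card_specialLinearGroup_mul_card_units (Fin 2) F
    rwa [card_GL_field, Fin.prod_univ_two, Nat.card_units, Nat.card_eq_fintype_card (α := F),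
      Fin.val_zero, Fin.val_one, pow_zero, pow_one] at h
  have hPSL : Nat.card SL(2, F) = Nat.card PSL(2, F) * 2 := by
    have h := (Subgroup.center SL(2, F)).card_eq_card_quotient_mul_card_subgroup
    rwa [card_center_specialLinearGroup_fin_two hF] at h
  refine Nat.eq_of_mul_eq_mul_right hq ?_
  calc 2 * Nat.card PSL(2, F) * (q - 1) = (q ^ 2 - 1) * (q ^ 2 - q) := by
        rw [mul_comm 2, ← hPSL, hSL]
    _ = q * (q ^ 2 - 1) * (q - 1) := by
        rw [show q ^ 2 - q = q * (q - 1) by rw [Nat.mul_sub_one, sq]]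
        ring

end Cardinality

section Icosahedral

/-- Klein's octahedral form, a binary sextic. For `w` a fifth root of unity, these five forms
correspond to the five octahedra inscribed in the icosahedron. -/
def octahedralForm {R : Type*} [CommRing R] (w : R) (v : Fin 2 → R) : R :=
  w ^ 3 * v 0 ^ 6 + 2 * w ^ 2 * v 0 ^ 5 * v 1 - 5 * w * v 0 ^ 4 * v 1 ^ 2
    - 5 * w ^ 4 * v 0 ^ 2 * v 1 ^ 4 - 2 * w ^ 3 * v 0 * v 1 ^ 5 + w ^ 2 * v 1 ^ 6

theorem octahedralForm_smul {R : Type*} [CommRing R] (w r : R) (v : Fin 2 → R) :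
    octahedralForm w (r • v) = r ^ 6 * octahedralForm w v := by
  simp only [octahedralForm, Pi.smul_apply, smul_eq_mul]
  ring

theorem specialLinearGroup_smul_eq {R : Type*} [CommRing R] (g : SL(2, R)) (v : Fin 2 → R) :
    g • v = ![g 0 0 * v 0 + g 0 1 * v 1, g 1 0 * v 0 + g 1 1 * v 1] := by
  rw [Matrix.SpecialLinearGroup.smul_def, smul_eq_mulVec]
  ext i
  fin_cases i <;> simp [mulVec, dotProduct]

section PrimitiveRoot

variable {F : Type*} [Field F] {ζ : F}

/-- Klein's five octahedral forms attached to a fifth root of unity `ζ`. -/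
def octahedralForms (ζ : F) (i : Fin 5) : (Fin 2 → F) → F :=
  octahedralForm (ζ ^ (i : ℕ))

theorem cyclotomic_relation (hζ : IsPrimitiveRoot ζ 5) :
    ζ ^ 4 + ζ ^ 3 + ζ ^ 2 + ζ + 1 = 0 := by
  have := hζ.geom_sum_eq_zero (by norm_num)
  simp only [Finset.sum_range_succ, Finset.sum_range_zero] at this
  linear_combination this

theorem octahedralForms_injective (hζ : IsPrimitiveRoot ζ 5) :
    Function.Injective (octahedralForms ζ) := by
  intro i j hij
  have hcube : (ζ ^ (i : ℕ)) ^ 3 = (ζ ^ (j : ℕ)) ^ 3 := by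
    simpa [octahedralForms, octahedralForm] using congrFun hij ![1, 0]
  have hroot (k : Fin 5) : ((ζ ^ (k : ℕ)) ^ 3) ^ 2 = ζ ^ (k : ℕ) := by
    linear_combination ζ ^ (k : ℕ) * (congrArg (· ^ (k : ℕ)) hζ.pow_eq_one)
  exact Fin.ext (hζ.pow_inj i.2 j.2 (by rw [← hroot i, ← hroot j, hcube]))

theorem five_ne_zero_of_isPrimitiveRoot (hζ : IsPrimitiveRoot ζ 5) : (5 : F) ≠ 0 :=
  mod_cast hζ.neZero'.out

/-- The Gauss sum of the quadratic character modulo `5`; it is a square root of `5`. -/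
def sqrtFive (ζ : F) : F :=
  ζ + ζ ^ 4 - ζ ^ 2 - ζ ^ 3

theorem sqrtFive_sq (hζ : IsPrimitiveRoot ζ 5) : sqrtFive ζ ^ 2 = 5 := by
  rw [sqrtFive]
  linear_combination (ζ ^ 4 - 3 * ζ ^ 3 + ζ ^ 2 + 5 * ζ - 5) * cyclotomic_relation hζ

theorem sqrtFive_ne_zero (hζ : IsPrimitiveRoot ζ 5) : sqrtFive ζ ≠ 0 :=
  ne_zero_pow two_ne_zero (sqrtFive_sq hζ ▸ five_ne_zero_of_isPrimitiveRoot hζ)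

/-- Klein's rotation of the icosahedron by `2π / 5` about an axis through two vertices. -/
def fiveFoldRotation (hζ : IsPrimitiveRoot ζ 5) : SL(2, F) :=
  ⟨!![ζ ^ 2, 0; 0, ζ ^ 3], by
    rw [det_fin_two_of]
    linear_combination hζ.pow_eq_one⟩

/-- Klein's half-turn of the icosahedron about an axis through the midpoints of two edges. -/
def halfTurn (hζ : IsPrimitiveRoot ζ 5) : SL(2, F) :=
  ⟨(sqrtFive ζ)⁻¹ • !![ζ ^ 4 - ζ, ζ ^ 2 - ζ ^ 3; ζ ^ 2 - ζ ^ 3, ζ - ζ ^ 4], by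
    rw [det_smul, det_fin_two_of, Fintype.card_fin, inv_pow, sqrtFive_sq hζ,
      inv_mul_eq_one₀ (five_ne_zero_of_isPrimitiveRoot hζ)]
    linear_combination (ζ ^ 4 - ζ ^ 3 + ζ ^ 2 - 5 * ζ + 5) * cyclotomic_relation hζ⟩

theorem pow_finRotate_five (hζ : IsPrimitiveRoot ζ 5) (i : Fin 5) :
    ζ ^ (finRotate 5 i : ℕ) = ζ * ζ ^ (i : ℕ) := by
  rw [finRotate_apply, Fin.val_add, ← pow_eq_pow_mod _ hζ.pow_eq_one]
  exact pow_succ' _ _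

theorem fiveFoldRotation_mem_permutingPairs (hζ : IsPrimitiveRoot ζ 5) :
    (fiveFoldRotation hζ, finRotate 5) ∈ permutingPairs SL(2, F) (octahedralForms ζ) := by
  intro i v
  have hpow := hζ.pow_eq_one
  simp only [octahedralForms, pow_finRotate_five hζ, specialLinearGroup_smul_eq]
  simp only [octahedralForm, fiveFoldRotation, Fin.isValue, of_apply, cons_val', cons_val_zero,
    cons_val_fin_one, cons_val_one, zero_mul, add_zero, zero_add]
  grind

theorem octahedralForms_swap_mul_swap (hζ : IsPrimitiveRoot ζ 5) (i : Fin 5) (v : Fin 2 → F) :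
    octahedralForms ζ ((swap 1 2 * swap 3 4 : Perm (Fin 5)) i)
      ![(ζ ^ 4 - ζ) * v 0 + (ζ ^ 2 - ζ ^ 3) * v 1, (ζ ^ 2 - ζ ^ 3) * v 0 + (ζ - ζ ^ 4) * v 1] =
    125 * octahedralForms ζ i v := by
  have := cyclotomic_relation hζ
  fin_cases i <;> simp [octahedralForms, octahedralForm, swap_apply_def] <;> grind

theorem halfTurn_smul (hζ : IsPrimitiveRoot ζ 5) (v : Fin 2 → F) :
    halfTurn hζ • v = (sqrtFive ζ)⁻¹ •
      ![(ζ ^ 4 - ζ) * v 0 + (ζ ^ 2 - ζ ^ 3) * v 1,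
        (ζ ^ 2 - ζ ^ 3) * v 0 + (ζ - ζ ^ 4) * v 1] := by
  rw [specialLinearGroup_smul_eq]
  ext j
  fin_cases j <;> simp [halfTurn, mul_add, mul_assoc]

theorem halfTurn_mem_permutingPairs (hζ : IsPrimitiveRoot ζ 5) :
    (halfTurn hζ, swap 1 2 * swap 3 4) ∈ permutingPairs SL(2, F) (octahedralForms ζ) := by
  intro i v
  have hsix : sqrtFive ζ ^ 6 = 125 := by
    rw [pow_mul _ 2 3, sqrtFive_sq hζ]
    norm_num
  calc octahedralForms ζ _ (halfTurn hζ • v)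
      = (sqrtFive ζ)⁻¹ ^ 6 * (sqrtFive ζ ^ 6 * octahedralForms ζ i v) := by
        rw [halfTurn_smul, hsix, ← octahedralForms_swap_mul_swap hζ]
        exact octahedralForm_smul _ _ _
    _ = octahedralForms ζ i v := by
        rw [inv_pow, inv_mul_cancel_left₀ (pow_ne_zero _ (sqrtFive_ne_zero hζ))]

theorem alternatingGroup_le_map_snd_permutingPairs (hζ : IsPrimitiveRoot ζ 5) :
    alternatingGroup (Fin 5) ≤
      (permutingPairs SL(2, F) (octahedralForms ζ)).map (MonoidHom.snd _ _) := by
  have hrotation := fiveFoldRotation_mem_permutingPairs hζ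
  have hhalfTurn := halfTurn_mem_permutingPairs hζ
  have hthree : (finRotate 5 * (swap 1 2 * swap 3 4)).IsThreeCycle := by
    rw [← card_support_eq_three_iff]
    decide
  exact alternatingGroup_le_of_isCycle_mem_of_isThreeCycle_mem
    (by rw [Nat.card_fin]; norm_num) isCycle_finRotate support_finRotate
    (Subgroup.mem_map_of_mem (MonoidHom.snd _ _) hrotation) hthree
    (Subgroup.mem_map_of_mem (MonoidHom.snd _ _) (mul_mem hrotation hhalfTurn))

-- This Fourier coefficient of the family of five forms isolates a single monomial.
theorem sum_octahedralForms (hζ : IsPrimitiveRoot ζ 5) (v : Fin 2 → F) :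
    ∑ i : Fin 5, ζ ^ (4 * i : ℕ) * octahedralForms ζ i v = -25 * (v 0 ^ 4 * v 1 ^ 2) := by
  have := cyclotomic_relation hζ
  simp only [Fin.sum_univ_five, octahedralForms, octahedralForm]
  simp only [Fin.isValue, Fin.coe_ofNat_eq_mod, Nat.zero_mod, mul_zero, pow_zero, one_pow, one_mul,
    mul_one, Nat.one_mod, pow_one, Nat.reduceMod, Nat.reduceMul, Nat.mod_succ, neg_mul]
  grind

theorem mem_center_of_forall_pow_four_mul_sq_eq (hζ : IsPrimitiveRoot ζ 5) {g : SL(2, F)}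
    (hg : ∀ v : Fin 2 → F, (g • v) 0 ^ 4 * (g • v) 1 ^ 2 = v 0 ^ 4 * v 1 ^ 2) :
    g ∈ Subgroup.center SL(2, F) := by
  have hinv (x y : F) : (g 0 0 * x + g 0 1 * y) ^ 4 * (g 1 0 * x + g 1 1 * y) ^ 2 =
      x ^ 4 * y ^ 2 := by
    simpa [specialLinearGroup_smul_eq] using hg ![x, y]
  have hdet : g 0 0 * g 1 1 - g 0 1 * g 1 0 = 1 := by rw [← det_fin_two, g.det_coe]
  have hleft : g 0 0 = 0 ∨ g 1 0 = 0 := by simpa using hinv 1 0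
  have hright : g 0 1 = 0 ∨ g 1 1 = 0 := by simpa using hinv 0 1
  -- An antidiagonal `g` would take `x⁴y²` to a multiple of `x²y⁴`.
  have h00 : g 0 0 ≠ 0 := by
    intro h00
    have h11 : g 1 1 = 0 := by grind
    have hat_one := hinv 1 1
    have hat_zeta := hinv ζ 1
    have hζ2 : ζ ^ 2 = 1 := by
      have := hζ.ne_zero (by norm_num)
      grind
    exact absurd (hζ.dvd_of_pow_eq_one 2 hζ2) (by norm_num)
  have h10 : g 1 0 = 0 := hleft.resolve_left h00
  have h01 : g 0 1 = 0 := by grind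
  have hsq : g 0 0 ^ 2 = 1 := by
    have := hinv 1 1
    grind
  have h11 : g 1 1 = g 0 0 := by grind
  refine Matrix.SpecialLinearGroup.mem_center_iff.2 ⟨g 0 0, by simpa using hsq, ?_⟩
  ext i j
  fin_cases i <;> fin_cases j <;> simp [h10, h01, h11]

theorem mem_center_of_forall_octahedralForms_smul_eq (hζ : IsPrimitiveRoot ζ 5) {g : SL(2, F)}
    (hg : ∀ i v, octahedralForms ζ i (g • v) = octahedralForms ζ i v) :
    g ∈ Subgroup.center SL(2, F) := by
  refine mem_center_of_forall_pow_four_mul_sq_eq hζ fun v ↦ ?_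
  have h25 : (-25 : F) ≠ 0 := by
    rw [show (-25 : F) = -5 ^ 2 by norm_num]
    exact neg_ne_zero.2 (pow_ne_zero 2 (five_ne_zero_of_isPrimitiveRoot hζ))
  refine mul_left_cancel₀ h25 ?_
  simp only [← sum_octahedralForms hζ, hg]

theorem octahedralForms_smul_of_mem_center {g : SL(2, F)} (hg : g ∈ Subgroup.center SL(2, F))
    (i : Fin 5) (v : Fin 2 → F) : octahedralForms ζ i (g • v) = octahedralForms ζ i v := by
  obtain ⟨r, hr, hrg⟩ := Matrix.SpecialLinearGroup.mem_center_iff.1 hg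
  have hsmul : g • v = r • v := by
    rw [Matrix.SpecialLinearGroup.smul_def, ← hrg, smul_eq_mulVec, scalar_apply,
      ← smul_one_eq_diagonal, smul_mulVec, one_mulVec]
  have hr6 : r ^ 6 = 1 := by
    rw [pow_mul r 2 3, show r ^ 2 = 1 by simpa using hr, one_pow]
  rw [hsmul, octahedralForms, octahedralForm_smul, hr6, one_mul]

theorem ker_permutingPairs_octahedralForms (hζ : IsPrimitiveRoot ζ 5) :
    ((QuotientGroup.mk' (Subgroup.center SL(2, F))).comp ((MonoidHom.fst _ _).comp
      (permutingPairs SL(2, F) (octahedralForms ζ)).subtype)).ker =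
    ((MonoidHom.snd _ _).comp (permutingPairs SL(2, F) (octahedralForms ζ)).subtype).ker := by
  ext ⟨⟨g, σ⟩, hp⟩
  replace hp : ∀ i v, octahedralForms ζ (σ i) (g • v) = octahedralForms ζ i v := hp
  change (g : PSL(2, F)) = 1 ↔ σ = 1
  rw [QuotientGroup.eq_one_iff]
  constructor
  · intro hg
    ext1 i
    refine octahedralForms_injective hζ (funext fun v ↦ ?_)
    rw [← octahedralForms_smul_of_mem_center hg, hp]
    rfl
  · rintro rfl
    exact mem_center_of_forall_octahedralForms_smul_eq hζ hp

theorem exists_subgroup_projectiveSpecialLinearGroup_mulEquiv_alternatingGroup_five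
    (hζ : IsPrimitiveRoot ζ 5) :
    ∃ K : Subgroup PSL(2, F), Nonempty (K ≃* alternatingGroup (Fin 5)) := by
  refine exists_subgroup_mulEquiv_of_ker_eq (ker_permutingPairs_octahedralForms hζ) ?_
  rw [MonoidHom.range_comp, Subgroup.range_subtype]
  exact alternatingGroup_le_map_snd_permutingPairs hζ

end PrimitiveRoot

end Icosahedral

theorem isPrimitiveRoot_three_zmod_eleven : IsPrimitiveRoot (3 : ZMod 11) 5 :=
  have : Fact (Nat.Prime 5) := ⟨by norm_num⟩
  IsPrimitiveRoot.iff_orderOf.2 (orderOf_eq_prime (by decide) (by decide))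

theorem card_projectiveSpecialLinearGroup_fin_two_zmod_eleven : Nat.card PSL(2, ZMod 11) = 660 := by
  have : Fact (Nat.Prime 11) := ⟨by norm_num⟩
  have h := two_mul_card_projectiveSpecialLinearGroup_fin_two (F := ZMod 11)
    (by rw [ZMod.ringChar_zmod_n]; norm_num)
  rw [ZMod.card] at h
  lia

/-- `PSL₂(11)` admits an exact factorization `G = HK` with `H` of order `11`
and `K ≅ A₅`. -/
theorem psl2_11_exact_factorization :
    ∃ H K : Subgroup (Matrix.ProjectiveSpecialLinearGroup (Fin 2) (ZMod 11)),
      Nat.card H = 11 ∧ Nonempty (K ≃* alternatingGroup (Fin 5)) ∧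
      H ⊓ K = ⊥ ∧
      ∀ g : Matrix.ProjectiveSpecialLinearGroup (Fin 2) (ZMod 11),
        ∃ h ∈ H, ∃ k ∈ K, g = h * k := by
  have : Fact (Nat.Prime 11) := ⟨by norm_num⟩
  obtain ⟨K, ⟨e⟩⟩ :=
    exists_subgroup_projectiveSpecialLinearGroup_mulEquiv_alternatingGroup_five
      isPrimitiveRoot_three_zmod_eleven
  have hcardK : Nat.card K = 60 := by
    rw [Nat.card_congr e.toEquiv, nat_card_alternatingGroup, Nat.card_fin]
    rfl
  have hindex : K.index = 11 := by
    have := K.card_mul_index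
    rw [hcardK, card_projectiveSpecialLinearGroup_fin_two_zmod_eleven] at this
    lia
  let H : Sylow 11 PSL(2, ZMod 11) := default
  have hHK : (H : Subgroup _).IsComplement' K :=
    isComplement'_sylow_of_index_eq_prime_pow H (hindex.trans (pow_one 11).symm)
      (by rw [hcardK]; norm_num)
  refine ⟨H, K, hHK.index_eq_card.symm.trans hindex, ⟨e⟩, hHK.disjoint.eq_bot, fun g ↦ ?_⟩
  obtain ⟨⟨h, k⟩, hg, -⟩ := hHK.existsUnique g
  exact ⟨h, h.2, k, k.2, hg.symm⟩
end
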